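/- Let A = (Q, X, q₀, T, F) be an updateable timed automaton and K = 1 + |Q|·|X|·(|X|+1). The least solution {G(q)}_{q ∈ Q} of the state-based guard equations for updateable timed automata is finite (i.e., G(q) = ⋃_i G^i(q) is a finite set of constraints for every q) if and only if G^K(q) is green for all q ∈ Q. -/

import Mathlib

open scoped NNReal

/-! ## Atomic constraints over a set of clocks -/

/-- Comparison operator `◁ ∈ {<, ≤}`. -/
inductive Ineq : Type where
  | lt : Ineq
  | le : Ineq
deriving DecidableEq

/-- Interpretation of a comparison operator on reals. -/
def Ineq.holds : Ineq → ℝ → ℝ → Prop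
  | .lt, a, b => a < b
  | .le, a, b => a ≤ b

/-- Atomic constraints over clocks `X`:
`upper x o c` is `x ◁ c` (c ∈ ℕ), `lower c o x` is `c ◁ x` (c ∈ ℕ),
`diag x y o d` is `x - y ◁ d` (d ∈ ℤ). -/
inductive Constr (X : Type) : Type where
  | upper : X → Ineq → ℕ → Constr X
  | lower : ℕ → Ineq → X → Constr X
  | diag : X → X → Ineq → ℤ → Constr X
deriving DecidableEq

namespace Constr

/-- Is the constraint a diagonal constraint `x - y ◁ d`? -/
def isDiag {X : Type} : Constr X → Bool
  | .diag _ _ _ _ => true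
  | _ => false

/-- The integer constant of a constraint. -/
def constOf {X : Type} : Constr X → ℤ
  | .upper _ _ c => (c : ℤ)
  | .lower c _ _ => (c : ℤ)
  | .diag _ _ _ d => d

/-- Satisfaction of a constraint by a clock valuation `v : X → ℝ≥0`. -/
def sat {X : Type} (v : X → ℝ≥0) : Constr X → Prop
  | .upper x o c => o.holds (v x : ℝ) (c : ℝ)
  | .lower c o x => o.holds (c : ℝ) (v x : ℝ)
  | .diag x y o d => o.holds ((v x : ℝ) - (v y : ℝ)) (d : ℝ)

end Constr

/-- Time elapse: `v + δ`. -/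
def shift {X : Type} (v : X → ℝ≥0) (δ : ℝ≥0) : X → ℝ≥0 := fun x => v x + δ

/-- The relation `v ⊑_G v'`: for all `φ ∈ G` and all delays `δ ≥ 0`,
`v + δ ⊨ φ` implies `v' + δ ⊨ φ`. -/
def simG {X : Type} (G : Set (Constr X)) (v v' : X → ℝ≥0) : Prop :=
  ∀ φ ∈ G, ∀ δ : ℝ≥0, Constr.sat (shift v δ) φ → Constr.sat (shift v' δ) φ

/-- `Z ⊑_G Z'` on sets of valuations. -/
def simGZ {X : Type} (G : Set (Constr X)) (Z Z' : Set (X → ℝ≥0)) : Prop :=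
  ∀ v ∈ Z, ∃ v' ∈ Z', simG G v v'

open Classical in
/-- `[R]v`: reset the clocks in `R` to `0`. -/
noncomputable def reset {X : Type} (R : Set X) (v : X → ℝ≥0) : X → ℝ≥0 :=
  fun x => if x ∈ R then 0 else v x

/-- Weakest precondition `wp(⊑_φ, R)` of a single constraint over a reset. -/
def wpReset {X : Type} (R : Set X) : Constr X → Set (Constr X)
  | .upper x o c => {ψ | x ∉ R ∧ ψ = .upper x o c}
  | .lower c o x => {ψ | x ∉ R ∧ ψ = .lower c o x}
  | .diag x y o d =>
      {ψ | (x ∉ R ∧ y ∉ R ∧ ψ = .diag x y o d) ∨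
           (x ∉ R ∧ y ∈ R ∧ 0 ≤ d ∧ ψ = .upper x o d.toNat) ∨
           (x ∈ R ∧ y ∉ R ∧ 0 ≤ -d ∧ ψ = .lower (-d).toNat o y)}

/-- Weakest precondition `wp(⊑_G, R)` of a set of constraints over a reset. -/
def wpResetSet {X : Type} (R : Set X) (G : Set (Constr X)) : Set (Constr X) :=
  ⋃ φ ∈ G, wpReset R φ

/-! ## Timed automata -/

/-- A transition: source state, guard (finite conjunction of constraints),
reset set, target state. -/
abbrev TTrans (Q X : Type) : Type := Q × Finset (Constr X) × Set X × Q

def TTrans.src {Q X : Type} (t : TTrans Q X) : Q := t.1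
def TTrans.grd {Q X : Type} (t : TTrans Q X) : Finset (Constr X) := t.2.1
def TTrans.rst {Q X : Type} (t : TTrans Q X) : Set X := t.2.2.1
def TTrans.tgt {Q X : Type} (t : TTrans Q X) : Q := t.2.2.2

/-- A timed automaton. -/
structure TA (Q X : Type) : Type where
  init : Q
  trans : Finset (TTrans Q X)
  acc : Set Q

/-- Action step of a timed automaton along transition `t`. -/
def Step {Q X : Type} (A : TA Q X) (t : TTrans Q X) (c c' : Q × (X → ℝ≥0)) : Prop :=
  t ∈ A.trans ∧ TTrans.src t = c.1 ∧ (∀ φ ∈ TTrans.grd t, Constr.sat c.2 φ) ∧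
    c'.1 = TTrans.tgt t ∧ c'.2 = reset (TTrans.rst t) c.2

/-- `r` is a simulation on the configurations of `A`: a reflexive transitive
relation, relating only configurations with equal states, compatible with
delays and action transitions. -/
def IsSimulation {Q X : Type} (A : TA Q X)
    (r : (Q × (X → ℝ≥0)) → (Q × (X → ℝ≥0)) → Prop) : Prop :=
  Reflexive r ∧ Transitive r ∧
  ∀ q v q' v', r (q, v) (q', v') →
    q = q' ∧
    (∀ δ : ℝ≥0, ∃ δ' : ℝ≥0, r (q, shift v δ) (q, shift v' δ')) ∧
    (∀ t c₁, Step A t (q, v) c₁ →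
      ∃ v₁', Step A t (q, v') (c₁.1, v₁') ∧ r c₁ (c₁.1, v₁'))

/-- The state-based guard equations:
`G(q) = ⋃_{(q,g,R,q₁) ∈ T} ({g} ∪ wp(⊑_{G(q₁)}, R))`. -/
def GuardEq {Q X : Type} (A : TA Q X) (G : Q → Set (Constr X)) : Prop :=
  ∀ q, G q = ⋃ t ∈ A.trans, ⋃ (_ : TTrans.src t = q),
    ((TTrans.grd t : Set (Constr X)) ∪ wpResetSet (TTrans.rst t) (G (TTrans.tgt t)))

/-! ## LU bounds -/

def lowerConstAt {X : Type} [DecidableEq X] (x : X) : Constr X → WithBot ℕ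
  | .lower c _ y => if y = x then (c : WithBot ℕ) else ⊥
  | _ => ⊥

def upperConstAt {X : Type} [DecidableEq X] (x : X) : Constr X → WithBot ℕ
  | .upper y _ c => if y = x then (c : WithBot ℕ) else ⊥
  | _ => ⊥

/-- `L_G(x)`: maximum constant among lower-bound constraints `c ◁ x` in `G`
(`⊥ = -∞` if none). -/
def Lbound {X : Type} [DecidableEq X] (G : Finset (Constr X)) (x : X) : WithBot ℕ :=
  G.sup (lowerConstAt x)

/-- `U_G(x)`: maximum constant among upper-bound constraints `x ◁ c` in `G`
(`⊥ = -∞` if none). -/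
def Ubound {X : Type} [DecidableEq X] (G : Finset (Constr X)) (x : X) : WithBot ℕ :=
  G.sup (upperConstAt x)

/-- The LU simulation `v ≼_LU v'` for bounds functions `L U : X → ℕ ∪ {-∞}`. -/
def luSim {X : Type} (L U : X → WithBot ℕ) (v v' : X → ℝ≥0) : Prop :=
  ∀ x : X,
    (v' x < v x → (L x).map (fun c : ℕ => (c : ℝ)) < ((v' x : ℝ) : WithBot ℝ)) ∧
    (v x < v' x → (U x).map (fun c : ℕ => (c : ℝ)) < ((v x : ℝ) : WithBot ℝ))

/-- The relation `v ⊑^LU_G v'`: `v ≼_{LU(G)} v'` and every diagonal constraint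
of `G` satisfied by `v` is satisfied by `v'`. -/
def luglu {X : Type} [DecidableEq X] (G : Finset (Constr X)) (v v' : X → ℝ≥0) : Prop :=
  luSim (Lbound G) (Ubound G) v v' ∧
    ∀ φ ∈ G, φ.isDiag → Constr.sat v φ → Constr.sat v' φ

/-- Lifting a relation on valuations to sets of valuations. -/
def zoneRel {X : Type} (r : (X → ℝ≥0) → (X → ℝ≥0) → Prop) (Z Z' : Set (X → ℝ≥0)) : Prop :=
  ∀ v ∈ Z, ∃ v' ∈ Z', r v v'

/-! ## Runs of timed automata -/

/-- `stepsFrom A c l`: the alternating delay-action sequence `l` is a valid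
sequence of steps of `A` starting at configuration `c`. -/
def stepsFrom {Q X : Type} (A : TA Q X) :
    (Q × (X → ℝ≥0)) → List (ℝ≥0 × TTrans Q X) → Prop
  | _, [] => True
  | c, (δ, t) :: l =>
      t ∈ A.trans ∧ TTrans.src t = c.1 ∧
      (∀ φ ∈ TTrans.grd t, Constr.sat (shift c.2 δ) φ) ∧
      stepsFrom A (TTrans.tgt t, reset (TTrans.rst t) (shift c.2 δ)) l

/-- Configuration reached after a sequence of delay-action steps. -/
noncomputable def endConfig {Q X : Type} :
    (Q × (X → ℝ≥0)) → List (ℝ≥0 × TTrans Q X) → (Q × (X → ℝ≥0))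
  | c, [] => c
  | c, (δ, t) :: l => endConfig (TTrans.tgt t, reset (TTrans.rst t) (shift c.2 δ)) l

/-- A run of `A`: a valid sequence of delay-action steps from `(q₀, 0̄)`. -/
def TA.Run {Q X : Type} (A : TA Q X) : Type :=
  {l : List (ℝ≥0 × TTrans Q X) // stepsFrom A (A.init, fun _ => 0) l}

/-- A run is accepting if it ends in an accepting state. -/
def TA.Accepting {Q X : Type} (A : TA Q X) (r : A.Run) : Prop :=
  (endConfig (A.init, fun _ => 0) r.val).1 ∈ A.acc

/-- `A` is diagonal-free: no guard contains a diagonal constraint. -/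
def DiagFree {Q X : Type} (A : TA Q X) : Prop :=
  ∀ t ∈ A.trans, ∀ φ ∈ TTrans.grd t, ¬ φ.isDiag

/-- The (finite) set of diagonal constraints occurring in guards of `A`. -/
def diagGuards {Q X : Type} [DecidableEq X] (A : TA Q X) : Finset (Constr X) :=
  A.trans.biUnion fun t => (TTrans.grd t).filter fun φ => φ.isDiag

/-! ## Updateable timed automata -/

/-- Atomic update of a clock: `x := c` or `x := y + d`. -/
inductive AtomicUp (X : Type) : Type where
  | const : ℕ → AtomicUp X
  | add : X → ℤ → AtomicUp X
deriving DecidableEq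

/-- `up(v) : X → ℝ` (may be negative). -/
def applyUpd {X : Type} (up : X → AtomicUp X) (v : X → ℝ≥0) : X → ℝ :=
  fun x => match up x with
    | .const c => (c : ℝ)
    | .add y d => (v y : ℝ) + (d : ℝ)

/-- Weakest precondition `wp(⊑_φ, up)` of a single constraint over an update. -/
def wpUpd {X : Type} [DecidableEq X] (up : X → AtomicUp X) : Constr X → Set (Constr X)
  | .upper x o c =>
      match up x with
      | .const _ => ∅
      | .add y d => if 0 ≤ (c : ℤ) - d then {Constr.upper y o ((c : ℤ) - d).toNat} else ∅
  | .lower c o x =>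
      match up x with
      | .const _ => ∅
      | .add y d => if 0 ≤ (c : ℤ) - d then {Constr.lower ((c : ℤ) - d).toNat o y} else ∅
  | .diag x y o c =>
      match up x, up y with
      | .const _, .const _ => ∅
      | .add y₁ d₁, .const c₂ =>
          if 0 ≤ c + (c₂ : ℤ) - d₁ then {Constr.upper y₁ o (c + (c₂ : ℤ) - d₁).toNat} else ∅
      | .const c₁, .add y₂ d₂ =>
          if 0 ≤ (c₁ : ℤ) - d₂ - c then {Constr.lower ((c₁ : ℤ) - d₂ - c).toNat o y₂} else ∅
      | .add y₁ d₁, .add y₂ d₂ =>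
          if y₁ = y₂ then ∅ else {Constr.diag y₁ y₂ o (c - d₁ + d₂)}

/-- Weakest precondition `wp(⊑_G, up)` of a set of constraints over an update. -/
def wpUpdSet {X : Type} [DecidableEq X] (up : X → AtomicUp X) (G : Set (Constr X)) :
    Set (Constr X) :=
  ⋃ φ ∈ G, wpUpd up φ

/-- The set of constraints `{0 ≤ x | x ∈ X}`. -/
def nonnegConstrs (X : Type) : Set (Constr X) := {φ | ∃ x : X, φ = Constr.lower 0 Ineq.le x}

/-- A transition of an updateable timed automaton: source, guard, update, target. -/
abbrev UTrans (Q X : Type) : Type := Q × Finset (Constr X) × (X → AtomicUp X) × Q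

def UTrans.src {Q X : Type} (t : UTrans Q X) : Q := t.1
def UTrans.grd {Q X : Type} (t : UTrans Q X) : Finset (Constr X) := t.2.1
def UTrans.upd {Q X : Type} (t : UTrans Q X) : X → AtomicUp X := t.2.2.1
def UTrans.tgt {Q X : Type} (t : UTrans Q X) : Q := t.2.2.2

/-- An updateable timed automaton. -/
structure UTA (Q X : Type) : Type where
  init : Q
  trans : Finset (UTrans Q X)
  acc : Set Q

/-- Action step of an updateable timed automaton along transition `t`:
the guard holds, `up(v) ≥ 0`, and the new valuation is `up(v)`. -/
def UStep {Q X : Type} (A : UTA Q X) (t : UTrans Q X) (c c' : Q × (X → ℝ≥0)) : Prop :=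
  t ∈ A.trans ∧ UTrans.src t = c.1 ∧ (∀ φ ∈ UTrans.grd t, Constr.sat c.2 φ) ∧
    c'.1 = UTrans.tgt t ∧ ∀ x, (c'.2 x : ℝ) = applyUpd (UTrans.upd t) c.2 x

/-- `r` is a simulation on configurations of an updateable timed automaton. -/
def IsSimulationU {Q X : Type} (A : UTA Q X)
    (r : (Q × (X → ℝ≥0)) → (Q × (X → ℝ≥0)) → Prop) : Prop :=
  Reflexive r ∧ Transitive r ∧
  ∀ q v q' v', r (q, v) (q', v') →
    q = q' ∧
    (∀ δ : ℝ≥0, ∃ δ' : ℝ≥0, r (q, shift v δ) (q, shift v' δ')) ∧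
    (∀ t c₁, UStep A t (q, v) c₁ →
      ∃ v₁', UStep A t (q, v') (c₁.1, v₁') ∧ r c₁ (c₁.1, v₁'))

/-- State-based guard equations for updateable timed automata. -/
def GuardEqU {Q X : Type} [DecidableEq X] (A : UTA Q X) (G : Q → Set (Constr X)) : Prop :=
  ∀ q, G q = ⋃ t ∈ A.trans, ⋃ (_ : UTrans.src t = q),
    ((UTrans.grd t : Set (Constr X)) ∪ wpUpdSet (UTrans.upd t) (nonnegConstrs X)
      ∪ wpUpdSet (UTrans.upd t) (G (UTrans.tgt t)))

/-- Kleene iterates `G^i(q)` of the state-based guard equations. -/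
def iterG {Q X : Type} [DecidableEq X] (A : UTA Q X) : ℕ → Q → Set (Constr X)
  | 0 => fun q => ⋃ t ∈ A.trans, ⋃ (_ : UTrans.src t = q),
      ((UTrans.grd t : Set (Constr X)) ∪ wpUpdSet (UTrans.upd t) (nonnegConstrs X))
  | (i + 1) => fun q => iterG A i q ∪
      (⋃ t ∈ A.trans, ⋃ (_ : UTrans.src t = q),
        wpUpdSet (UTrans.upd t) (iterG A i (UTrans.tgt t)))

/-- `G^{i+1}(q)` is coloured red: a new diagonal constraint was added, or a new
non-diagonal constraint whose constant is strictly bigger than the constant of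
every non-diagonal constraint of the same kind on the same clock in `G^i(q)`. -/
def RedAt {Q X : Type} [DecidableEq X] (A : UTA Q X) : ℕ → Q → Prop
  | 0, _ => False
  | (i + 1), q =>
      (∃ φ : Constr X, φ ∈ iterG A (i + 1) q ∧ φ ∉ iterG A i q ∧ φ.isDiag) ∨
      (∃ (x : X) (o : Ineq) (c : ℕ),
        Constr.upper x o c ∈ iterG A (i + 1) q ∧ Constr.upper x o c ∉ iterG A i q ∧
        ∀ (o' : Ineq) (c' : ℕ), Constr.upper x o' c' ∈ iterG A i q → c' < c) ∨
      (∃ (x : X) (o : Ineq) (c : ℕ),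
        Constr.lower c o x ∈ iterG A (i + 1) q ∧ Constr.lower c o x ∉ iterG A i q ∧
        ∀ (o' : Ineq) (c' : ℕ), Constr.lower c' o' x ∈ iterG A i q → c' < c)

/-- `G^i(q)` is coloured green. -/
def GreenAt {Q X : Type} [DecidableEq X] (A : UTA Q X) (i : ℕ) (q : Q) : Prop :=
  ¬ RedAt A i q

/-- Absolute value of the constant of an atomic update. -/
def updBound {X : Type} : AtomicUp X → ℕ
  | .const c => c
  | .add _ d => d.natAbs

/-!
Say that a non-diagonal constraint is dominated by those of the same shape with at least the same
constant, and a diagonal constraint only by itself. Then `G^{i+1}(q)` is green iff every constraint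
in it is dominated by one in `G^i(q)`. As weakest preconditions preserve domination, a step that is
green at all states makes every later step green, so all constraints are dominated by the finitely
many in the sets `G^i(q)`, and each constraint dominates only finitely many others.

Conversely, an undominated constraint of `G^{i+1}(q)` is produced by a path of `i + 1` propagation
steps. There are `|Q| · |X| · (|X| + 1)` pairs of a state and a shape, so a long path repeats one.
If the later occurrence is dominated by the earlier one, cutting out the cycle produces a dominating
constraint earlier, which is impossible. Otherwise the cycle can be iterated, each round changing
the constant by the same nonzero amount, and the least solution is infinite.
-/

namespace Constr

variable {X : Type} {φ ψ φ' : Constr X} {x y : X} {o : Ineq} {c : ℕ}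

/-- The comparison operator of a constraint. -/
def op : Constr X → Ineq
  | .upper _ o _ => o
  | .lower _ o _ => o
  | .diag _ _ o _ => o

/-- The pair of clocks compared by a constraint, where `none` stands for a reference clock that is
constantly zero: `x ◁ c` is read as `x - 0 ◁ c`, and `c ◁ x` as `0 - x ◁ -c`. -/
def shape : Constr X → Option X × Option X
  | .upper x _ _ => (some x, none)
  | .lower _ _ x => (none, some x)
  | .diag x y _ _ => (some x, some y)

theorem shape_eq_upper_iff : φ.shape = (some x, none) ↔ ∃ o c, φ = upper x o c := by
  cases φ <;> simp [shape]

theorem shape_eq_lower_iff : φ.shape = (none, some x) ↔ ∃ o c, φ = lower c o x := by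
  cases φ <;> simp [shape]

theorem shape_eq_diag_iff : φ.shape = (some x, some y) ↔ ∃ o d, φ = diag x y o d := by
  cases φ <;> simp [shape]

theorem isDiag_congr (h : φ.shape = ψ.shape) : φ.isDiag = ψ.isDiag := by
  cases φ <;> cases ψ <;> simp_all [shape, isDiag]

theorem eq_of_shape_op_constOf (hs : φ.shape = ψ.shape) (ho : φ.op = ψ.op)
    (hc : φ.constOf = ψ.constOf) : φ = ψ := by
  cases φ <;> cases ψ <;> simp_all [shape, op, constOf]

theorem constOf_nonneg (h : φ.isDiag = false) : 0 ≤ φ.constOf := by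
  cases φ <;> simp_all [isDiag, constOf]

/-- Domination: non-diagonal constraints of the same shape are compared by their constants,
irrespective of the operators, and diagonal constraints are pairwise incomparable. -/
instance : Preorder (Constr X) where
  le φ ψ := φ = ψ ∨ φ.isDiag = false ∧ φ.shape = ψ.shape ∧ φ.constOf ≤ ψ.constOf
  le_refl _ := Or.inl rfl
  le_trans := by
    rintro φ ψ χ (rfl | ⟨hd, hs, hc⟩) (rfl | ⟨hd', hs', hc'⟩)
    · exact Or.inl rfl
    · exact Or.inr ⟨hd', hs', hc'⟩
    · exact Or.inr ⟨hd, hs, hc⟩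
    · exact Or.inr ⟨hd, hs.trans hs', hc.trans hc'⟩

theorem le_iff :
    φ ≤ ψ ↔ φ = ψ ∨ φ.isDiag = false ∧ φ.shape = ψ.shape ∧ φ.constOf ≤ ψ.constOf :=
  Iff.rfl

theorem upper_le_iff : upper x o c ≤ ψ ↔ ∃ o' c', ψ = upper x o' c' ∧ c ≤ c' := by
  constructor
  · rintro (rfl | ⟨-, hs, hc⟩)
    · exact ⟨o, c, rfl, le_rfl⟩
    · obtain ⟨o', c', rfl⟩ := shape_eq_upper_iff.1 hs.symm
      exact ⟨o', c', rfl, Int.ofNat_le.1 hc⟩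
  · rintro ⟨o', c', rfl, hc⟩
    exact Or.inr ⟨rfl, rfl, Int.ofNat_le.2 hc⟩

theorem lower_le_iff : lower c o x ≤ ψ ↔ ∃ o' c', ψ = lower c' o' x ∧ c ≤ c' := by
  constructor
  · rintro (rfl | ⟨-, hs, hc⟩)
    · exact ⟨o, c, rfl, le_rfl⟩
    · obtain ⟨o', c', rfl⟩ := shape_eq_lower_iff.1 hs.symm
      exact ⟨o', c', rfl, Int.ofNat_le.1 hc⟩
  · rintro ⟨o', c', rfl, hc⟩
    exact Or.inr ⟨rfl, rfl, Int.ofNat_le.2 hc⟩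

theorem le_iff_eq_of_isDiag (h : φ.isDiag) : φ ≤ ψ ↔ φ = ψ := by
  simp [le_iff, h]

theorem ge_or_constOf_ne_of_shape_eq (hs : φ.shape = ψ.shape) (ho : φ.op = ψ.op) :
    ψ ≤ φ ∨ φ.constOf ≠ ψ.constOf ∧ (φ.isDiag ∨ φ.constOf ≤ ψ.constOf) := by
  by_cases hc : φ.constOf = ψ.constOf
  · exact Or.inl (eq_of_shape_op_constOf hs ho hc).ge
  by_cases hd : φ.isDiag
  · exact Or.inr ⟨hc, Or.inl hd⟩
  rcases le_total φ.constOf ψ.constOf with hle | hle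
  · exact Or.inr ⟨hc, Or.inr hle⟩
  · exact Or.inl (Or.inr ⟨by simpa [isDiag_congr hs] using hd, hs.symm, hle⟩)

instance : Finite Ineq :=
  .of_surjective (fun b : Bool => if b then Ineq.lt else Ineq.le) fun o => by cases o <;> simp

theorem finite_Iic (ψ : Constr X) : (Set.Iic ψ).Finite := by
  have hnondiag :
      {φ : Constr X | φ.isDiag = false ∧ φ.shape = ψ.shape ∧ φ.constOf ≤ ψ.constOf}.Finite := by
    refine .of_injOn (f := fun φ => (φ.op, φ.constOf)) (t := Set.univ ×ˢ Set.Icc 0 ψ.constOf)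
      (fun φ hφ => ⟨trivial, constOf_nonneg hφ.1, hφ.2.2⟩) ?_
      (Set.finite_univ.prod (Set.finite_Icc _ _))
    intro φ hφ φ' hφ' heq
    obtain ⟨ho, hc⟩ := Prod.mk.inj heq
    exact eq_of_shape_op_constOf (hφ.2.1.trans hφ'.2.1.symm) ho hc
  exact (Set.finite_singleton ψ).union hnondiag

/-- `WpStep up φ ψ` says that `wp(⊑_φ, up) = {ψ}`: the relational form of `wpUpd`, in which the
requirement that the new constant be nonnegative is carried by its type `ℕ`. -/
inductive WpStep (up : X → AtomicUp X) : Constr X → Constr X → Prop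
  | upper {x y o d} {c c' : ℕ} (hx : up x = .add y d) (hc : c' = c - d) :
      WpStep up (.upper x o c) (.upper y o c')
  | lower {x y o d} {c c' : ℕ} (hx : up x = .add y d) (hc : c' = c - d) :
      WpStep up (.lower c o x) (.lower c' o y)
  | diagUpper {x y y₁ o d₁ c} {c₂ c' : ℕ} (hx : up x = .add y₁ d₁) (hy : up y = .const c₂)
      (hc : c' = c + c₂ - d₁) : WpStep up (.diag x y o c) (.upper y₁ o c')
  | diagLower {x y y₂ o d₂ c} {c₁ c' : ℕ} (hx : up x = .const c₁) (hy : up y = .add y₂ d₂)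
      (hc : c' = c₁ - d₂ - c) : WpStep up (.diag x y o c) (.lower c' o y₂)
  | diag {x y y₁ y₂ o d₁ d₂ c} (hx : up x = .add y₁ d₁) (hy : up y = .add y₂ d₂) (hne : y₁ ≠ y₂) :
      WpStep up (.diag x y o c) (.diag y₁ y₂ o (c - d₁ + d₂))

variable {up : X → AtomicUp X}

theorem mem_wpUpd_iff [DecidableEq X] : ψ ∈ wpUpd up φ ↔ WpStep up φ ψ := by
  constructor
  · intro h
    cases φ <;> simp only [wpUpd] at h <;> split at h <;> try split_ifs at h
    all_goals first | exact h.elim | obtain rfl := h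
    · exact .upper ‹_› (by lia)
    · exact .lower ‹_› (by lia)
    · exact .diagUpper ‹_› ‹_› (by lia)
    · exact .diagLower ‹_› ‹_› (by lia)
    · exact .diag ‹_› ‹_› ‹_›
  · rintro (⟨hx, hc⟩ | ⟨hx, hc⟩ | ⟨hx, hy, hc⟩ | ⟨hx, hy, hc⟩ | ⟨hx, hy, hne⟩)
    · simp [wpUpd, hx, ← hc]
    · simp [wpUpd, hx, ← hc]
    · simp [wpUpd, hx, hy, ← hc]
    · simp [wpUpd, hx, hy, ← hc]
    · simp [wpUpd, hx, hy, hne]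

theorem finite_wpUpd [DecidableEq X] (up : X → AtomicUp X) (φ : Constr X) :
    (wpUpd up φ).Finite := by
  cases φ <;> simp only [wpUpd] <;> split <;> try split_ifs
  all_goals first | exact Set.finite_empty | exact Set.finite_singleton _

namespace WpStep

theorem shape_left_ne (h : WpStep up φ ψ) : φ.shape.1 ≠ φ.shape.2 := by
  cases h <;> grind [shape]

theorem shape_right_ne (h : WpStep up φ ψ) : ψ.shape.1 ≠ ψ.shape.2 := by
  cases h <;> simp_all [shape]

theorem op_eq (h : WpStep up φ ψ) : ψ.op = φ.op := by
  cases h <;> rfl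

theorem isDiag_le (h : WpStep up φ ψ) : ψ.isDiag ≤ φ.isDiag := by
  cases h <;> simp [isDiag]

theorem exists_translate (h : WpStep up φ ψ) (hd : ψ.isDiag = φ.isDiag) (hs : φ'.shape = φ.shape)
    (hc : φ.isDiag ∨ φ.constOf ≤ φ'.constOf) :
    ∃ ψ', WpStep up φ' ψ' ∧ ψ'.shape = ψ.shape ∧
      ψ'.constOf - ψ.constOf = φ'.constOf - φ.constOf := by
  cases h with
  | @upper x y o d c c' hx hc' =>
    obtain ⟨o', k, rfl⟩ := shape_eq_upper_iff.1 hs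
    have hck : (c : ℤ) ≤ k := hc.resolve_left Bool.false_ne_true
    exact ⟨_, .upper (c' := (k - d).toNat) hx (by lia), rfl, by simp only [constOf]; lia⟩
  | @lower x y o d c c' hx hc' =>
    obtain ⟨o', k, rfl⟩ := shape_eq_lower_iff.1 hs
    have hck : (c : ℤ) ≤ k := hc.resolve_left Bool.false_ne_true
    exact ⟨_, .lower (c' := (k - d).toNat) hx (by lia), rfl, by simp only [constOf]; lia⟩
  | diag hx hy hne =>
    obtain ⟨o', k, rfl⟩ := shape_eq_diag_iff.1 hs
    exact ⟨_, .diag hx hy hne, rfl, by simp only [constOf]; lia⟩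
  | diagUpper => exact absurd hd Bool.false_ne_true
  | diagLower => exact absurd hd Bool.false_ne_true

theorem exists_le (h : WpStep up φ ψ) (hle : φ ≤ φ') : ∃ ψ', WpStep up φ' ψ' ∧ ψ ≤ ψ' := by
  rcases hle with rfl | ⟨hd, hs, hc⟩
  · exact ⟨ψ, h, le_rfl⟩
  have hd' : ψ.isDiag = false := le_bot_iff.1 (h.isDiag_le.trans_eq hd)
  obtain ⟨ψ', h', hs', hc'⟩ := h.exists_translate (hd'.trans hd.symm) hs.symm (Or.inr hc)
  exact ⟨ψ', h', Or.inr ⟨hd', hs'.symm, by lia⟩⟩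

end WpStep

end Constr

namespace UTA

variable {Q X : Type}

/-- `A.Propagates a b` says that some transition of `A` from the state of `b` to the state of `a`
turns the constraint of `a` into that of `b` by taking the weakest precondition; constraints thus
travel against the direction of the transitions. -/
def Propagates (A : UTA Q X) (a b : Q × Constr X) : Prop :=
  ∃ t ∈ A.trans, UTrans.src t = b.1 ∧ UTrans.tgt t = a.1 ∧ Constr.WpStep (UTrans.upd t) a.2 b.2

/-- `A.IsPath f n` says that `f 0, …, f n` is a sequence of `n` propagation steps. -/
def IsPath (A : UTA Q X) (f : ℕ → Q × Constr X) (n : ℕ) : Prop :=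
  ∀ j < n, A.Propagates (f j) (f (j + 1))

variable {A : UTA Q X} {a b : Q × Constr X} {f : ℕ → Q × Constr X} {n m i j l : ℕ} {q : Q}
  {φ ψ : Constr X}

namespace Propagates

theorem exists_le (h : A.Propagates a b) (hle : a.2 ≤ φ) :
    ∃ ψ, A.Propagates (a.1, φ) (b.1, ψ) ∧ b.2 ≤ ψ := by
  obtain ⟨t, ht, hsrc, htgt, hw⟩ := h
  obtain ⟨ψ, hw', hψ⟩ := hw.exists_le hle
  exact ⟨ψ, ⟨t, ht, hsrc, htgt, hw'⟩, hψ⟩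

theorem exists_translate (h : A.Propagates a b) (hd : b.2.isDiag = a.2.isDiag)
    (hs : φ.shape = a.2.shape) (hc : a.2.isDiag ∨ a.2.constOf ≤ φ.constOf) :
    ∃ ψ, A.Propagates (a.1, φ) (b.1, ψ) ∧ ψ.shape = b.2.shape ∧
      ψ.constOf - b.2.constOf = φ.constOf - a.2.constOf := by
  obtain ⟨t, ht, hsrc, htgt, hw⟩ := h
  obtain ⟨ψ, hw', hψ⟩ := hw.exists_translate hd hs hc
  exact ⟨ψ, ⟨t, ht, hsrc, htgt, hw'⟩, hψ⟩

end Propagates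

namespace IsPath

theorem mono (h : A.IsPath f n) (hm : m ≤ n) : A.IsPath f m :=
  fun j hj => h j (hj.trans_le hm)

theorem segment (h : A.IsPath f n) (hij : i + m ≤ n) : A.IsPath (fun k => f (i + k)) m :=
  fun j hj => h (i + j) (by lia)

theorem op_eq (h : A.IsPath f n) : (f n).2.op = (f 0).2.op := by
  induction n with
  | zero => rfl
  | succ n ih =>
    obtain ⟨_, _, _, _, hw⟩ := h n n.lt_succ_self
    exact hw.op_eq.trans (ih (h.mono n.le_succ))

theorem isDiag_le (h : A.IsPath f n) : (f n).2.isDiag ≤ (f 0).2.isDiag := by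
  induction n with
  | zero => exact le_rfl
  | succ n ih =>
    obtain ⟨_, _, _, _, hw⟩ := h n n.lt_succ_self
    exact hw.isDiag_le.trans (ih (h.mono n.le_succ))

theorem shape_ne (h : A.IsPath f (n + 1)) (hj : j ≤ n + 1) :
    (f j).2.shape.1 ≠ (f j).2.shape.2 := by
  rcases hj.lt_or_eq with hj | rfl
  · obtain ⟨_, _, _, _, hw⟩ := h j hj
    exact hw.shape_left_ne
  · obtain ⟨_, _, _, _, hw⟩ := h n n.lt_succ_self
    exact hw.shape_right_ne

theorem exists_repetition [Fintype Q] [Fintype X] (h : A.IsPath f (n + 1))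
    (hn : Fintype.card Q * (Fintype.card X * (Fintype.card X + 1)) ≤ n + 1) :
    ∃ i j, i < j ∧ j ≤ n + 1 ∧ (f i).1 = (f j).1 ∧ (f i).2.shape = (f j).2.shape := by
  classical
  let T : Finset (Q × Option X × Option X) := Finset.univ ×ˢ Finset.univ.offDiag
  have hcard : T.card < (Finset.range (n + 2)).card := by
    have hoff : (Fintype.card X + 1) * (Fintype.card X + 1) - (Fintype.card X + 1) =
        Fintype.card X * (Fintype.card X + 1) := by
      rw [Nat.succ_mul, Nat.add_sub_cancel]
    simp only [T, Finset.card_product, Finset.offDiag_card, Finset.card_univ, Fintype.card_option,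
      Finset.card_range, hoff]
    lia
  have hmaps : Set.MapsTo (fun j => ((f j).1, (f j).2.shape)) (Finset.range (n + 2)) T := by
    intro j hj
    simpa [T] using h.shape_ne (Nat.lt_succ_iff.1 (Finset.mem_range.1 hj))
  obtain ⟨i, hi, j, hj, hne, heq⟩ := Finset.exists_ne_map_eq_of_card_lt_of_maps_to hcard hmaps
  obtain ⟨hq, hs⟩ := Prod.mk.inj heq
  rw [Finset.mem_range, Nat.lt_succ_iff] at hi hj
  rcases hne.lt_or_gt with hij | hij
  · exact ⟨i, j, hij, hj, hq, hs⟩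
  · exact ⟨j, i, hij, hi, hq.symm, hs.symm⟩

end IsPath

variable [DecidableEq X]

theorem mem_iterG_succ :
    ψ ∈ iterG A (i + 1) q ↔
      ψ ∈ iterG A i q ∨ ∃ a : Q × Constr X, a.2 ∈ iterG A i a.1 ∧ A.Propagates a (q, ψ) := by
  simp only [iterG, Set.mem_union, Set.mem_iUnion, wpUpdSet, Constr.mem_wpUpd_iff, Propagates]
  refine or_congr_right ⟨?_, ?_⟩
  · rintro ⟨t, ht, hsrc, φ, hφ, hw⟩
    exact ⟨(UTrans.tgt t, φ), hφ, t, ht, hsrc, rfl, hw⟩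
  · rintro ⟨⟨_, φ⟩, hφ, t, ht, hsrc, rfl, hw⟩
    exact ⟨t, ht, hsrc, φ, hφ, hw⟩

theorem Propagates.mem_iterG_succ (h : A.Propagates a b) (ha : a.2 ∈ iterG A i a.1) :
    b.2 ∈ iterG A (i + 1) b.1 :=
  UTA.mem_iterG_succ.2 (Or.inr ⟨a, ha, h⟩)

theorem monotone_iterG (A : UTA Q X) (q : Q) : Monotone fun i => iterG A i q :=
  monotone_nat_of_le_succ fun _ _ hψ => mem_iterG_succ.2 (Or.inl hψ)

theorem finite_iterG [Finite X] (A : UTA Q X) (i : ℕ) (q : Q) : (iterG A i q).Finite := by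
  have hwp (up : X → AtomicUp X) {G : Set (Constr X)} (hG : G.Finite) : (wpUpdSet up G).Finite :=
    hG.biUnion fun φ _ => Constr.finite_wpUpd up φ
  have hnonneg : (nonnegConstrs X).Finite :=
    (Set.finite_range fun x => Constr.lower 0 .le x).subset fun _ ⟨x, hx⟩ => ⟨x, hx.symm⟩
  induction i generalizing q with
  | zero =>
    exact A.trans.finite_toSet.biUnion fun t _ => Set.finite_iUnion fun _ =>
      (Finset.finite_toSet _).union (hwp _ hnonneg)
  | succ i ih =>
    exact (ih q).union <| A.trans.finite_toSet.biUnion fun t _ => Set.finite_iUnion fun _ =>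
      hwp _ (ih _)

theorem greenAt_succ_iff :
    GreenAt A (i + 1) q ↔ IsCofinalFor (iterG A (i + 1) q) (iterG A i q) := by
  constructor
  · intro hgreen φ hφ
    by_contra! hdom
    have hnew : φ ∉ iterG A i q := fun h => hdom φ h le_rfl
    apply hgreen
    cases φ with
    | diag x y o d => exact Or.inl ⟨_, hφ, hnew, rfl⟩
    | upper x o c =>
      refine Or.inr (Or.inl ⟨x, o, c, hφ, hnew, fun o' c' h => ?_⟩)
      exact lt_of_not_ge fun hc => hdom _ h (Constr.upper_le_iff.2 ⟨o', c', rfl, hc⟩)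
    | lower c o x =>
      refine Or.inr (Or.inr ⟨x, o, c, hφ, hnew, fun o' c' h => ?_⟩)
      exact lt_of_not_ge fun hc => hdom _ h (Constr.lower_le_iff.2 ⟨o', c', rfl, hc⟩)
  · rintro hcof (⟨φ, hφ, hnew, hd⟩ | ⟨x, o, c, hφ, -, hmax⟩ | ⟨x, o, c, hφ, -, hmax⟩)
    · obtain ⟨ψ, hψ, hle⟩ := hcof hφ
      obtain rfl := (Constr.le_iff_eq_of_isDiag hd).1 hle
      exact hnew hψ
    · obtain ⟨ψ, hψ, hle⟩ := hcof hφ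
      obtain ⟨o', c', rfl, hc⟩ := Constr.upper_le_iff.1 hle
      exact (hmax o' c' hψ).not_ge hc
    · obtain ⟨ψ, hψ, hle⟩ := hcof hφ
      obtain ⟨o', c', rfl, hc⟩ := Constr.lower_le_iff.1 hle
      exact (hmax o' c' hψ).not_ge hc

theorem isCofinalFor_iterG_succ_succ
    (h : ∀ q, IsCofinalFor (iterG A (i + 1) q) (iterG A i q)) (q : Q) :
    IsCofinalFor (iterG A (i + 2) q) (iterG A (i + 1) q) := by
  intro ψ hψ
  obtain hψ | ⟨⟨p, φ⟩, hφ, hprop⟩ := mem_iterG_succ.1 hψ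
  · exact ⟨ψ, hψ, le_rfl⟩
  · obtain ⟨φ', hφ', hle⟩ := h p hφ
    obtain ⟨ψ', hprop', hle'⟩ := hprop.exists_le hle
    exact ⟨ψ', hprop'.mem_iterG_succ hφ', hle'⟩

theorem isCofinalFor_iterG_add
    (h : ∀ q, IsCofinalFor (iterG A (i + 1) q) (iterG A i q)) (n : ℕ) (q : Q) :
    IsCofinalFor (iterG A (i + n) q) (iterG A i q) := by
  have hstep (n : ℕ) : ∀ q, IsCofinalFor (iterG A (i + n + 1) q) (iterG A (i + n) q) := by
    induction n with
    | zero => exact h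
    | succ n ih => exact isCofinalFor_iterG_succ_succ ih
  induction n with
  | zero => exact .rfl
  | succ n ih => exact (hstep n q).trans ih

theorem finite_iUnion_iterG_of_greenAt [Finite X] (h : ∀ q, GreenAt A (i + 1) q) (q : Q) :
    (⋃ i, iterG A i q).Finite := by
  refine ((finite_iterG A i q).biUnion fun ψ _ => Constr.finite_Iic ψ).subset ?_
  refine Set.iUnion_subset fun n φ hφ => ?_
  obtain ⟨ψ, hψ, hle⟩ := isCofinalFor_iterG_add (fun q => greenAt_succ_iff.1 (h q)) n q
    (monotone_iterG A q (Nat.le_add_left n i) hφ)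
  exact Set.mem_biUnion hψ hle

theorem exists_isPath_of_mem_iterG (hψ : ψ ∈ iterG A n q) (hnew : ∀ j < n, ψ ∉ iterG A j q) :
    ∃ f, f n = (q, ψ) ∧ A.IsPath f n ∧ (f 0).2 ∈ iterG A 0 (f 0).1 := by
  induction n generalizing q ψ with
  | zero => exact ⟨fun _ => (q, ψ), rfl, fun _ hj => absurd hj (Nat.not_lt_zero _), hψ⟩
  | succ n ih =>
    obtain hold | ⟨⟨p, φ⟩, hφ, hprop⟩ := mem_iterG_succ.1 hψ
    · exact absurd hold (hnew n n.lt_succ_self)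
    have hφnew (j : ℕ) (hj : j < n) : φ ∉ iterG A j p := fun hmem =>
      hnew (j + 1) (Nat.succ_lt_succ hj) (hprop.mem_iterG_succ hmem)
    obtain ⟨f, hfn, hf, hf0⟩ := ih hφ hφnew
    refine ⟨Function.update f (n + 1) (q, ψ), Function.update_self .., fun j hj => ?_, by simpa⟩
    rw [Function.update_of_ne hj.ne]
    rcases Nat.lt_succ_iff_lt_or_eq.1 hj with hj | rfl
    · rw [Function.update_of_ne (by lia)]
      exact hf j hj
    · rwa [Function.update_self, hfn]

namespace IsPath

theorem exists_ge_mem_iterG (h : A.IsPath f n) (hφ : φ ∈ iterG A l (f 0).1)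
    (hle : (f 0).2 ≤ φ) : ∃ ψ ∈ iterG A (l + n) (f n).1, (f n).2 ≤ ψ := by
  induction n with
  | zero => exact ⟨φ, hφ, hle⟩
  | succ n ih =>
    obtain ⟨ψ, hψ, hle'⟩ := ih (h.mono n.le_succ)
    obtain ⟨ψ', hprop, hle''⟩ := (h n n.lt_succ_self).exists_le hle'
    exact ⟨ψ', hprop.mem_iterG_succ hψ, hle''⟩

theorem mem_iterG (h : A.IsPath f n) (h0 : (f 0).2 ∈ iterG A l (f 0).1) :
    (f n).2 ∈ iterG A (l + n) (f n).1 := by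
  induction n with
  | zero => exact h0
  | succ n ih => exact (h n n.lt_succ_self).mem_iterG_succ (ih (h.mono n.le_succ))

theorem exists_translate_mem_iterG (h : A.IsPath f n) (hd : (f n).2.isDiag = (f 0).2.isDiag)
    (hφ : φ ∈ iterG A l (f 0).1) (hs : φ.shape = (f 0).2.shape)
    (hc : (f 0).2.isDiag ∨ (f 0).2.constOf ≤ φ.constOf) :
    ∃ ψ ∈ iterG A (l + n) (f n).1, ψ.shape = (f n).2.shape ∧
      ψ.constOf - (f n).2.constOf = φ.constOf - (f 0).2.constOf := by
  induction n with
  | zero => exact ⟨φ, hφ, hs, rfl⟩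
  | succ n ih =>
    have hpath := h.mono n.le_succ
    have hprop := h n n.lt_succ_self
    have hle : (f (n + 1)).2.isDiag ≤ (f n).2.isDiag := by
      obtain ⟨_, _, _, _, hw⟩ := hprop
      exact hw.isDiag_le
    have hdn : (f n).2.isDiag = (f 0).2.isDiag := le_antisymm hpath.isDiag_le (hd.ge.trans hle)
    obtain ⟨ψ, hψ, hψs, hψc⟩ := ih hpath hdn
    obtain ⟨ψ', hprop', hψs', hψc'⟩ := hprop.exists_translate (hd.trans hdn.symm) hψs
      (hc.imp hdn.trans fun hc => by lia)
    exact ⟨ψ', hprop'.mem_iterG_succ hψ, hψs', hψc'.trans hψc⟩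

theorem infinite_iUnion_iterG_of_cycle (h : A.IsPath f n) (h0 : (f 0).2 ∈ iterG A l (f 0).1)
    (hq : (f 0).1 = (f n).1) (hs : (f 0).2.shape = (f n).2.shape)
    (hne : (f 0).2.constOf ≠ (f n).2.constOf)
    (hc : (f 0).2.isDiag ∨ (f 0).2.constOf ≤ (f n).2.constOf) :
    (⋃ i, iterG A i (f 0).1).Infinite := by
  set d := (f n).2.constOf - (f 0).2.constOf
  have hround (m : ℕ) : ∃ φ ∈ ⋃ i, iterG A i (f 0).1,
      φ.shape = (f 0).2.shape ∧ φ.constOf = (f 0).2.constOf + m * d := by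
    induction m with
    | zero => exact ⟨_, Set.mem_iUnion_of_mem l h0, rfl, by simp⟩
    | succ m ih =>
      obtain ⟨φ, hφ, hφs, hφc⟩ := ih
      obtain ⟨i, hφ⟩ := Set.mem_iUnion.1 hφ
      have hge : (f 0).2.isDiag ∨ (f 0).2.constOf ≤ φ.constOf := hc.imp_right fun hc => by
        rw [hφc, le_add_iff_nonneg_right]
        exact mul_nonneg m.cast_nonneg (sub_nonneg.2 hc)
      obtain ⟨ψ, hψ, hψs, hψc⟩ :=
        h.exists_translate_mem_iterG (Constr.isDiag_congr hs.symm) hφ hφs hge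
      refine ⟨ψ, Set.mem_iUnion_of_mem _ (hq ▸ hψ), hψs.trans hs.symm, ?_⟩
      push_cast
      linarith
  choose g hg _ hgc using hround
  refine Set.infinite_of_injective_forall_mem (f := g) (fun m m' hmm => ?_) hg
  have hconst := congrArg Constr.constOf hmm
  rw [hgc, hgc, add_right_inj, mul_left_inj' (sub_ne_zero.2 hne.symm)] at hconst
  exact_mod_cast hconst

theorem exists_ge_of_cycle_le (h : A.IsPath f (n + 1)) (h0 : (f 0).2 ∈ iterG A 0 (f 0).1)
    (hij : i < j) (hj : j ≤ n + 1) (hq : (f i).1 = (f j).1) (hle : (f j).2 ≤ (f i).2) :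
    ∃ ψ ∈ iterG A n (f (n + 1)).1, (f (n + 1)).2 ≤ ψ := by
  obtain ⟨m, hm⟩ := Nat.exists_eq_add_of_le hj
  have hi : (f i).2 ∈ iterG A i (f j).1 := by
    simpa [hq] using (h.mono (hij.le.trans hj)).mem_iterG h0
  obtain ⟨ψ, hψ, hψle⟩ := (h.segment hm.ge).exists_ge_mem_iterG hi hle
  rw [← hm] at hψ hψle
  exact ⟨ψ, monotone_iterG A _ (by lia) hψ, hψle⟩

end IsPath

theorem greenAt_succ_of_finite [Fintype Q] [Fintype X] (h : ∀ q, (⋃ i, iterG A i q).Finite)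
    (hn : Fintype.card Q * (Fintype.card X * (Fintype.card X + 1)) ≤ n + 1) (q : Q) :
    GreenAt A (n + 1) q := by
  rw [greenAt_succ_iff]
  intro ψ hψ
  by_contra! hdom
  have hnew (j : ℕ) (hj : j < n + 1) : ψ ∉ iterG A j q := fun hmem =>
    hdom ψ (monotone_iterG A q (Nat.lt_succ_iff.1 hj) hmem) le_rfl
  obtain ⟨f, hfn, hf, hf0⟩ := exists_isPath_of_mem_iterG hψ hnew
  obtain ⟨i, j, hij, hj, hq, hs⟩ := hf.exists_repetition hn
  obtain ⟨m, rfl⟩ := Nat.exists_eq_add_of_le hij.le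
  have hcycle := hf.segment hj
  rcases Constr.ge_or_constOf_ne_of_shape_eq hs hcycle.op_eq.symm with hle | ⟨hne, hc⟩
  · obtain ⟨χ, hχ, hψχ⟩ := hf.exists_ge_of_cycle_le hf0 hij hj hq hle
    rw [hfn] at hχ hψχ
    exact hdom χ hχ hψχ
  · have hi := (hf.mono (hij.le.trans hj)).mem_iterG hf0
    exact hcycle.infinite_iUnion_iterG_of_cycle hi hq hs hne hc (h _)

end UTA

theorem stmt16_general {Q X : Type} [Fintype Q] [Fintype X] [DecidableEq X] (A : UTA Q X) {n : ℕ}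
    (hn : Fintype.card Q * (Fintype.card X * (Fintype.card X + 1)) ≤ n + 1) :
    (∀ q, (⋃ i : ℕ, iterG A i q).Finite) ↔ ∀ q, GreenAt A (n + 1) q :=
  ⟨fun h => UTA.greenAt_succ_of_finite h hn, UTA.finite_iUnion_iterG_of_greenAt⟩

/-! ## The statement -/

theorem stmt16 {Q X : Type} [Fintype Q] [Fintype X] [DecidableEq X] (A : UTA Q X) :
    (∀ q, (⋃ i : ℕ, iterG A i q).Finite) ↔
      ∀ q, GreenAt A (1 + Fintype.card Q * (Fintype.card X * (Fintype.card X + 1))) q := by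
  rw [Nat.add_comm]
  exact stmt16_general A (Nat.le_succ _)
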